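/- Let n ≥ 1, τ > 0, γ > 0, and let M ∈ ℝ^{n×n} satisfy M_{ii} − M_{ij} ≥ γ for all i and all j ≠ i. Then the Frobenius norm of the difference between the row-wise softmax with temperature τ and the identity satisfies ‖S_τ(M) − I_n‖_F ≤ n·√(n−1)·e^{−γ/τ}. -/

import Mathlib

/-- Row-wise softmax with temperature `τ`. -/
noncomputable def softmaxT {n : ℕ} (τ : ℝ) (M : Matrix (Fin n) (Fin n) ℝ) :
    Matrix (Fin n) (Fin n) ℝ :=
  Matrix.of fun i j => Real.exp (M i j / τ) / ∑ k, Real.exp (M i k / τ)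

/-- Under diagonal dominance of the logits, the Frobenius-norm distance of the
softmax to the identity matrix is at most `n √(n-1) e^{-γ/τ}`. -/
theorem softmax_frobenius_close_to_id_of_diagonal_dominance {n : ℕ} (hn : 1 ≤ n)
    {τ γ : ℝ} (hτ : 0 < τ) (hγ : 0 < γ) (M : Matrix (Fin n) (Fin n) ℝ)
    (hM : ∀ i j, j ≠ i → γ ≤ M i i - M i j) :
    Real.sqrt (∑ i, ∑ j, ((softmaxT τ M - 1) i j) ^ 2) ≤
      (n : ℝ) * Real.sqrt ((n : ℝ) - 1) * Real.exp (-γ / τ) := by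
  have hn1 : (0:ℝ) ≤ (n:ℝ) - 1 := by
    have : (1:ℝ) ≤ n := by exact_mod_cast hn
    linarith
  set e := Real.exp (-γ / τ) with he
  have hepos : 0 < e := Real.exp_pos _
  have hrow : ∀ i, ∑ j, ((softmaxT τ M - 1) i j) ^ 2 ≤ (n:ℝ) * ((n:ℝ) - 1) * e ^ 2 := by
    intro i
    have hZ : 0 < ∑ k, Real.exp (M i k / τ) :=
      Finset.sum_pos (fun k _ => Real.exp_pos _) ⟨i, Finset.mem_univ i⟩
    have hnn : ∀ j, 0 ≤ softmaxT τ M i j := fun j =>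
      div_nonneg (Real.exp_pos _).le hZ.le
    have hsum : ∑ j, softmaxT τ M i j = 1 := by
      simp only [softmaxT, Matrix.of_apply]
      rw [← Finset.sum_div, div_self hZ.ne']
    have hle : ∀ j, j ≠ i → softmaxT τ M i j ≤ e := by
      intro j hj
      simp only [softmaxT, Matrix.of_apply]
      rw [div_le_iff₀ hZ]
      have h1 : Real.exp (M i i / τ) ≤ ∑ k, Real.exp (M i k / τ) :=
        Finset.single_le_sum (f := fun k => Real.exp (M i k / τ))
          (fun k _ => (Real.exp_pos _).le) (Finset.mem_univ i)
      refine le_trans ?_ (mul_le_mul_of_nonneg_left h1 hepos.le)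
      rw [he, ← Real.exp_add, ← add_div]
      apply Real.exp_le_exp.mpr
      have := hM i j hj
      apply div_le_div_of_nonneg_right _ hτ.le
      linarith
    have hcard : (((Finset.univ.erase i).card : ℕ) : ℝ) = (n:ℝ) - 1 := by
      rw [Finset.card_erase_of_mem (Finset.mem_univ i), Finset.card_univ, Fintype.card_fin]
      push_cast [hn]
      ring
    rw [← Finset.add_sum_erase _ _ (Finset.mem_univ i)] at hsum ⊢
    have hA : ∑ j ∈ Finset.univ.erase i, softmaxT τ M i j ≤ ((n:ℝ) - 1) * e := by
      have := Finset.sum_le_card_nsmul (Finset.univ.erase i) (fun j => softmaxT τ M i j) e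
        (fun j hj => hle j (Finset.ne_of_mem_erase hj))
      rwa [nsmul_eq_mul, hcard] at this
    have hA0 : 0 ≤ ∑ j ∈ Finset.univ.erase i, softmaxT τ M i j :=
      Finset.sum_nonneg fun j _ => hnn j
    have hB : ∑ j ∈ Finset.univ.erase i, ((softmaxT τ M - 1) i j) ^ 2 ≤ ((n:ℝ) - 1) * e ^ 2 := by
      have := Finset.sum_le_card_nsmul (Finset.univ.erase i)
        (fun j => ((softmaxT τ M - 1) i j) ^ 2) (e ^ 2) (by
          intro j hj
          have hj' := Finset.ne_of_mem_erase hj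
          simp only [Matrix.sub_apply, Matrix.one_apply_ne hj'.symm, sub_zero]
          exact pow_le_pow_left₀ (hnn j) (hle j hj') 2)
      rwa [nsmul_eq_mul, hcard] at this
    have hD : ((softmaxT τ M - 1) i i) ^ 2 ≤ (((n:ℝ) - 1) * e) ^ 2 := by
      rw [Matrix.sub_apply, Matrix.one_apply_eq, ← neg_sq]
      apply pow_le_pow_left₀ <;> linarith
    nlinarith
  have htot : ∑ i, ∑ j, ((softmaxT τ M - 1) i j) ^ 2 ≤ (n:ℝ) * ((n:ℝ) * ((n:ℝ) - 1) * e ^ 2) := by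
    refine (Finset.sum_le_sum fun i _ => hrow i).trans ?_
    simp
  apply Real.sqrt_le_iff.mpr
  refine ⟨by positivity, htot.trans (le_of_eq ?_)⟩
  rw [mul_pow, mul_pow, Real.sq_sqrt hn1]
  ring
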